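/- arXiv:2003.06865 — 2 statements merged into one kernel-verified Lean document; each statement's English description precedes it below -/
import Mathlib

section
/- Let X be a simplicial set and let T : Δ/X ⥤ 𝒜 be a covariant Gabriel–Zisman natural system with values in a complete abelian category 𝒜. Then there is an isomorphism of cochain complexes C^*(P_X, T) ≅ C^*_GZ(X, T), where C^*(P_X,T) is the alternating coface map cochain complex associated to the cosimplicial object Ran_{P_X}(T) : Δ ⥤ 𝒜 and C^*_GZ(X,T) is the Gabriel–Zisman cochain complex of X with coefficients in T. In particular H^n(P_X, T) ≅ H^n_GZ(X, T) for all n. -/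
/-!
STATEMENT 1: For a simplicial set `X` and a covariant Gabriel–Zisman natural system
`T : Δ/X ⥤ 𝒜` with values in a complete abelian category `𝒜`, there is an isomorphism of
cochain complexes `C^*(P_X, T) ≅ C^*_GZ(X, T)`, where `C^*(P_X, T)` is the alternating
coface map cochain complex of the cosimplicial object `Ran_{P_X}(T)` and `C^*_GZ(X, T)` is
the Gabriel–Zisman cochain complex.  In particular `H^n(P_X, T) ≅ H^n_GZ(X, T)` for all `n`.
-/

open CategoryTheory CategoryTheory.Limits Opposite Simplicial

universe v u

namespace GZ

variable {𝒜 : Type u} [Category.{v} 𝒜] [HasLimits 𝒜]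

/-- The simplex category `Δ/X` of a simplicial set `X`, realized as the opposite of
the category of elements of `X`. -/
abbrev SimplexCat (X : SSet.{v}) : Type v := X.Elementsᵒᵖ

/-- The object of `Δ/X` corresponding to a simplex `σ ∈ X_n`. -/
abbrev elt (X : SSet.{v}) {n : SimplexCategoryᵒᵖ} (σ : X.obj n) : SimplexCat X :=
  op (X.elementsMk n σ)

/-- The morphism of `Δ/X` from `X(θ)(σ)` to `σ` determined by `θ`. -/
abbrev eltHom (X : SSet.{v}) {n m : SimplexCategoryᵒᵖ} (θ : n ⟶ m) (σ : X.obj n) :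
    elt X (X.map θ σ) ⟶ elt X σ :=
  Quiver.Hom.op (CategoryOfElements.homMk (X.elementsMk n σ) (X.elementsMk m (X.map θ σ)) θ rfl)

/-- The projection functor `P_X : Δ/X ⥤ Δ`. -/
def proj (X : SSet.{v}) : SimplexCat X ⥤ SimplexCategory :=
  (CategoryOfElements.π X).leftOp

lemma rep_aux (X : SSet.{v}) (T : SimplexCat X ⥤ 𝒜) {u w : SimplexCategoryᵒᵖ}
    (g : u ⟶ w) (σ : X.obj u) (b : X.obj w) (h : X.map g σ = b) :
    Pi.π (fun τ : X.obj w => T.obj (elt X τ)) b ≫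
        T.map (Quiver.Hom.op (CategoryOfElements.homMk (X.elementsMk u σ) (X.elementsMk w b) g h)) =
      Pi.π (fun τ : X.obj w => T.obj (elt X τ)) (X.map g σ) ≫ T.map (eltHom X g σ) := by
  subst h; rfl

/-- The cosimplicial replacement `∏* T` of a Gabriel–Zisman natural system `T : Δ/X ⥤ 𝒜`. -/
@[simps!]
noncomputable def rep (X : SSet.{v}) (T : SimplexCat X ⥤ 𝒜) : CosimplicialObject 𝒜 where
  obj n := ∏ᶜ fun σ : X.obj (op n) => T.obj (elt X σ)
  map {n m} θ := Pi.lift fun σ : X.obj (op m) =>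
    Pi.π _ (X.map θ.op σ) ≫ T.map (eltHom X θ.op σ)
  map_id n := by
    ext σ
    simp only [limit.lift_π, Fan.mk_π_app, Category.id_comp, op_id]
    have h : X.map (𝟙 (op n)) σ = σ := by simp
    rw [← rep_aux X T (𝟙 (op n)) σ σ h]
    have e : (CategoryOfElements.homMk (X.elementsMk (op n) σ) (X.elementsMk (op n) σ)
        (𝟙 (op n)) h) = 𝟙 _ := CategoryOfElements.ext X _ _ rfl
    rw [e, op_id, T.map_id, Category.comp_id]
  map_comp {n m k} θ θ' := by
    ext σ
    simp only [Category.assoc, limit.lift_π, Fan.mk_π_app]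
    rw [← Category.assoc]
    simp only [limit.lift_π, Fan.mk_π_app, Category.assoc, ← T.map_comp]
    have h : X.map (θ ≫ θ').op σ = X.map θ.op (X.map θ'.op σ) := by
      rw [op_comp, FunctorToTypes.map_comp_apply]
    rw [← rep_aux X T (θ ≫ θ').op σ _ h]
    congr 1

end GZ

namespace GZ

variable {𝒜 : Type u} [Category.{v} 𝒜] [HasLimits 𝒜]

instance (priority := 100) smallLimits : HasLimitsOfSize.{0, v} 𝒜 :=
  hasLimitsOfSizeShrink.{0, v, v, v} 𝒜

/-- The Gabriel–Zisman cochain complex `C^*_GZ(X, T)`: its `n`-th term is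
`∏_{σ ∈ X_n} T(σ)` and its differential is the alternating sum of the coface-induced maps. -/
noncomputable def cochainComplexGZ [Preadditive 𝒜] (X : SSet.{v}) (T : SimplexCat X ⥤ 𝒜) :
    CochainComplex 𝒜 ℕ :=
  (AlgebraicTopology.alternatingCofaceMapComplex 𝒜).obj (rep X T)

end GZ

/-!
The projection `P_X : Δ/X ⥤ Δ` is a discrete fibration with fiber `X_n` over `[n]`: every arrow
`f : [n] ⟶ P_X(τ)` lifts uniquely to an arrow of `Δ/X` ending at `τ`, so it factors through the
identity of `[n]` at the simplex `X(f)(τ) ∈ X_n`. The discrete category `X_n` is therefore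
coreflective, and so initial, in the comma category `[n] ↓ P_X`, and the limit computing
`Ran_{P_X} T` at `[n]` is the product of `T` over `X_n`.
-/

namespace GZ

section Elements

variable {C : Type*} [Category* C] (F : Cᵒᵖ ⥤ Type*) (c : C)

/-- The inclusion of the fiber `F(c)` of the discrete fibration `(∫ F)ᵒᵖ ⥤ C` into the comma
category of objects under `c`, sending `x` to `((c, x), 𝟙 c)`. -/
def fiberInclusion : Discrete (F.obj (op c)) ⥤ StructuredArrow c (CategoryOfElements.π F).leftOp :=
  Discrete.functor fun x => StructuredArrow.mk (Y := op (F.elementsMk (op c) x)) (𝟙 c)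

variable {F c} in
lemma map_hom_op_eq_of_hom {f g : StructuredArrow c (CategoryOfElements.π F).leftOp} (φ : f ⟶ g) :
    F.map f.hom.op f.right.unop.2 = F.map g.hom.op g.right.unop.2 :=
  calc F.map f.hom.op f.right.unop.2
    _ = F.map f.hom.op (F.map φ.right.unop.val g.right.unop.2) :=
      congrArg _ φ.right.unop.property.symm
    _ = F.map (f.hom ≫ (CategoryOfElements.π F).leftOp.map φ.right).op g.right.unop.2 :=
      (F.map_comp_apply φ.right.unop.val f.hom.op g.right.unop.2).symm
    _ = F.map g.hom.op g.right.unop.2 :=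
      congrArg (fun θ : c ⟶ g.right.unop.1.unop => F.map θ.op g.right.unop.2) (StructuredArrow.w φ)

/-- Restriction of elements along structured arrows: `((d, y), f : c ⟶ d)` is sent to `F(f)(y)`.
It is right adjoint to `fiberInclusion F c`. -/
def fiberRestriction :
    StructuredArrow c (CategoryOfElements.π F).leftOp ⥤ Discrete (F.obj (op c)) where
  obj f := ⟨F.map f.hom.op f.right.unop.2⟩
  map φ := Discrete.eqToHom (map_hom_op_eq_of_hom φ)

instance (x : Discrete (F.obj (op c))) (f : StructuredArrow c (CategoryOfElements.π F).leftOp) :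
    Subsingleton ((fiberInclusion F c).obj x ⟶ f) where
  allEq φ ψ := by
    have map_right (χ : (fiberInclusion F c).obj x ⟶ f) :
        (CategoryOfElements.π F).leftOp.map χ.right = f.hom :=
      (Category.id_comp _).symm.trans (StructuredArrow.w χ)
    exact StructuredArrow.ext _ _ <| (CategoryOfElements.π F).leftOp.map_injective <|
      (map_right φ).trans (map_right ψ).symm

/-- The fiber `F(c)` is coreflective in the comma category under `c`: the counit at `((d, y), f)`
is the arrow `((c, F(f)(y)), 𝟙 c) ⟶ ((d, y), f)` given by `f` itself. -/
def fiberInclusionAdjunction : fiberInclusion F c ⊣ fiberRestriction F c where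
  unit := Discrete.natTrans fun x => Discrete.eqToHom (F.map_id_apply _ x.as).symm
  counit :=
    { app f := StructuredArrow.homMk
        (CategoryOfElements.homMk f.right.unop _ f.hom.op rfl).op (Category.id_comp _)
      naturality _ _ _ := Subsingleton.elim (α := (fiberInclusion F c).obj _ ⟶ _) _ _ }
  left_triangle_components _ := Subsingleton.elim _ _
  right_triangle_components _ := Subsingleton.elim _ _

instance : (fiberInclusion F c).Initial :=
  Functor.initial_of_adjunction (fiberInclusionAdjunction F c)

end Elements

variable {𝒜 : Type u} [Category.{v} 𝒜] [HasLimits 𝒜] (X : SSet.{v}) (T : SimplexCat X ⥤ 𝒜)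

/-- The counit `P_X ⋙ rep X T ⟶ T`, projecting `∏_{τ ∈ X_n} T(τ)` onto the factor indexed by the
given simplex; it exhibits `rep X T` as a right Kan extension of `T` along `P_X`. -/
noncomputable def repCounit : proj X ⋙ rep X T ⟶ T where
  app e := Pi.π (fun σ : X.obj e.unop.1 => T.obj (elt X σ)) e.unop.2
  naturality e e' φ := (limit.lift_π _ _).trans
    (rep_aux X T φ.unop.val e'.unop.2 e.unop.2 φ.unop.property).symm

/-- The right extension of `T` along `P_X` given by the cosimplicial replacement `rep X T`. -/
noncomputable abbrev repExtension : (proj X).RightExtension T :=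
  Functor.RightExtension.mk (rep X T) (repCounit X T)

lemma repExtension_coneAt_π_fiberInclusion (n : SimplexCategory) (σ : X.obj (op n)) :
    ((repExtension X T).coneAt n).π.app ((fiberInclusion X n).obj ⟨σ⟩) =
      Pi.π (fun τ : X.obj (op n) => T.obj (elt X τ)) σ :=
  (congrArg (· ≫ Pi.π _ σ) ((rep X T).map_id n)).trans (Category.id_comp _)

/-- The cosimplicial replacement is a pointwise right Kan extension: by initiality of the fiber
inclusion, its value at `n` only has to be compared with the product over `X_n`. -/
noncomputable def repIsPointwiseRightKanExtension :
    (repExtension X T).IsPointwiseRightKanExtension := fun n =>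
  Functor.Initial.isLimitWhiskerEquiv (fiberInclusion X n) _ <|
    IsLimit.postcomposeHomEquiv Discrete.natIsoFunctor _ <|
      (productIsProduct fun σ : X.obj (op n) => T.obj (elt X σ)).ofIsoLimit <|
        Cone.ext (Iso.refl _) fun ⟨σ⟩ =>
          ((Category.id_comp _).trans <| (Category.comp_id _).trans <|
            repExtension_coneAt_π_fiberInclusion X T n σ).symm

/-- The comparison `Ran_{P_X} T ≅ rep X T` given by uniqueness of right Kan extensions. -/
noncomputable def pointwiseRightKanExtensionIsoRep :
    (proj X).pointwiseRightKanExtension T ≅ rep X T :=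
  haveI : (rep X T).IsRightKanExtension (repCounit X T) :=
    (repIsPointwiseRightKanExtension X T).isRightKanExtension
  Functor.rightKanExtensionUnique _ ((proj X).pointwiseRightKanExtensionCounit T) _ (repCounit X T)

end GZ

open GZ in
theorem stmt_1_general {𝒜 : Type u} [Category.{v} 𝒜] [Preadditive 𝒜] [CategoryWithHomology 𝒜]
    [HasLimits 𝒜]
    (X : SSet.{v}) (T : SimplexCat X ⥤ 𝒜) :
    Nonempty ((AlgebraicTopology.alternatingCofaceMapComplex 𝒜).obj
        ((proj X).pointwiseRightKanExtension T) ≅ cochainComplexGZ X T) ∧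
    ∀ n : ℕ,
      Nonempty ((((AlgebraicTopology.alternatingCofaceMapComplex 𝒜).obj
          ((proj X).pointwiseRightKanExtension T)).homology n) ≅
        (cochainComplexGZ X T).homology n) :=
  let e := (AlgebraicTopology.alternatingCofaceMapComplex 𝒜).mapIso
    (pointwiseRightKanExtensionIsoRep X T)
  ⟨⟨e⟩, fun n => ⟨(HomologicalComplex.homologyFunctor 𝒜 _ n).mapIso e⟩⟩

open GZ in
theorem stmt_1 {𝒜 : Type u} [Category.{v} 𝒜] [Abelian 𝒜] [HasLimits 𝒜]
    (X : SSet.{v}) (T : SimplexCat X ⥤ 𝒜) :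
    Nonempty ((AlgebraicTopology.alternatingCofaceMapComplex 𝒜).obj
        ((proj X).pointwiseRightKanExtension T) ≅ cochainComplexGZ X T) ∧
    ∀ n : ℕ,
      Nonempty ((((AlgebraicTopology.alternatingCofaceMapComplex 𝒜).obj
          ((proj X).pointwiseRightKanExtension T)).homology n) ≅
        (cochainComplexGZ X T).homology n) := by
  exact stmt_1_general X T
end

section
/- Let X be a simplicial set and let T : (Δ/X)ᵒᵖ ⥤ 𝒜 be a functor into a cocomplete category 𝒜. Then for every n ≥ 0 the value at [n] of the (pointwise) left Kan extension Lan_{P_X^{op}}(T) : Δᵒᵖ ⥤ 𝒜 of T along the opposite projection P_X^{op} : (Δ/X)ᵒᵖ ⥤ Δᵒᵖ is isomorphic to the coproduct ⊕_{σ ∈ X_n} T(σ), naturally in T. -/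
/-!
STATEMENT 3: For a simplicial set `X` and a functor `T : (Δ/X)ᵒᵖ ⥤ 𝒜` into a cocomplete
category `𝒜`, the value at `[n]` of the (pointwise) left Kan extension of `T` along the
opposite projection `P_Xᵒᵖ : (Δ/X)ᵒᵖ ⥤ Δᵒᵖ` is isomorphic to the coproduct
`⊕_{σ ∈ X_n} T(σ)`, naturally in `T`.
-/

open CategoryTheory CategoryTheory.Limits Opposite

universe v u

/-- The simplex category `Δ/X` of a simplicial set `X`, realized as the opposite of
the category of elements of `X`. -/
abbrev SimplexCat (X : SSet.{v}) : Type v := X.Elementsᵒᵖ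

/-- The object of `Δ/X` corresponding to a simplex `σ ∈ X_n`. -/
abbrev elt (X : SSet.{v}) {n : SimplexCategoryᵒᵖ} (σ : X.obj n) : SimplexCat X :=
  op (X.elementsMk n σ)

/-- The projection functor `P_X : Δ/X ⥤ Δ`, `([n], σ) ↦ [n]`. -/
def proj (X : SSet.{v}) : SimplexCat X ⥤ SimplexCategory :=
  (CategoryOfElements.π X).leftOp

instance (priority := 100) smallColimits {𝒜 : Type u} [Category.{v} 𝒜] [HasColimits 𝒜] :
    HasColimitsOfSize.{0, v} 𝒜 := hasColimitsOfSizeShrink.{0, v, v, v} 𝒜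

/-!
An object over `c` in the comma category of the projection is an element `y ∈ X(b)` together with a
map that carries it to some `x ∈ X(c)`. This map is the only morphism from the object to an element
of the fiber over `c`. So the comma category is a disjoint union of categories with terminal objects
`(x, 𝟙 c)`, the discrete category `X(c)` is final in it, and the colimit that computes the Kan
extension at `c` is a coproduct over `X(c)`.
-/

section FinalDiscrete

variable {I J : Type*} [Category* J]

theorem final_discreteFunctor_of_unique_hom (p : I → J)
    (h : ∀ j, Nonempty (Unique (Σ i, j ⟶ p i))) : (Discrete.functor p).Final where
  out j := by
    obtain ⟨⟨⟨i₀, f₀⟩⟩, unique⟩ := h j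
    have : Nonempty (StructuredArrow j (Discrete.functor p)) :=
      ⟨StructuredArrow.mk (Y := Discrete.mk i₀) f₀⟩
    refine zigzag_isConnected fun s t ↦ ?_
    obtain ⟨⟨i⟩, f, rfl⟩ := s.mk_surjective
    obtain ⟨⟨i'⟩, f', rfl⟩ := t.mk_surjective
    obtain ⟨rfl, rfl⟩ := Sigma.mk.inj_iff.1 ((unique ⟨i, f⟩).trans (unique ⟨i', f'⟩).symm)
    exact .refl _

/-- A colimit cocone restricts to a coproduct cofan along a family of objects which is final as a
functor from a discrete category. -/
noncomputable def isColimitCofanOfFinal {𝒜 : Type*} [Category* 𝒜] (p : I → J)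
    [(Discrete.functor p).Final] {F : J ⥤ 𝒜} {s : Cocone F} (hs : IsColimit s) :
    IsColimit (Cofan.mk s.pt fun i ↦ s.ι.app (p i)) :=
  ((IsColimit.precomposeInvEquiv (Discrete.compNatIsoDiscrete p F) _).symm
    ((Functor.Final.isColimitWhiskerEquiv (Discrete.functor p) s).symm hs)).ofIsoColimit
      (Cofan.ext (Iso.refl _) fun i ↦
        (Category.comp_id _).trans (Category.id_comp (s.ι.app (p i))))

end FinalDiscrete

section Elements

variable {C : Type*} [Category* C] (X : Cᵒᵖ ⥤ Type*) {c : Cᵒᵖ}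

/-- The opposite of the projection `X.Elementsᵒᵖ ⥤ C` for a presheaf `X` on `C`. The double opposite
is kept so that this is `(proj X).op` when `X` is a simplicial set. -/
abbrev opProj : (X.Elementsᵒᵖ)ᵒᵖ ⥤ Cᵒᵖ :=
  (CategoryOfElements.π X).leftOp.op

/-- An element `x ∈ X(c)` as an object of the source of `opProj X`. -/
abbrev opElt (x : X.obj c) : (X.Elementsᵒᵖ)ᵒᵖ :=
  op (op (X.elementsMk c x))

/-- An element `x ∈ X(c)` as an object over `c`, by means of the identity of `c`. -/
def fiberArrow (x : X.obj c) : CostructuredArrow (opProj X) c :=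
  CostructuredArrow.mk (Y := opElt X x) (𝟙 c)

theorem nonempty_unique_hom_fiberArrow (a : CostructuredArrow (opProj X) c) :
    Nonempty (Unique (Σ x : X.obj c, a ⟶ fiberArrow X x)) := by
  let u : a.left.unop.unop.1 ⟶ c := a.hom
  let lift : a.left.unop.unop ⟶ X.elementsMk c (X.map u a.left.unop.unop.2) :=
    CategoryOfElements.homMk _ _ u rfl
  refine ⟨⟨⟨_, CostructuredArrow.homMk lift.op.op (Category.comp_id u)⟩⟩, ?_⟩
  rintro ⟨x, g⟩
  have val_eq : g.left.unop.unop.val = u := (Category.comp_id _).symm.trans (CostructuredArrow.w g)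
  obtain rfl : X.map u a.left.unop.unop.2 = x := val_eq ▸ g.left.unop.unop.property
  congr 1
  ext
  exact Quiver.Hom.unop_inj (Quiver.Hom.unop_inj (CategoryOfElements.ext _ _ _ val_eq))

instance final_fiberArrow : (Discrete.functor (fiberArrow X (c := c))).Final :=
  final_discreteFunctor_of_unique_hom _ (nonempty_unique_hom_fiberArrow X)

variable {𝒜 : Type*} [Category* 𝒜] {T : (X.Elementsᵒᵖ)ᵒᵖ ⥤ 𝒜}

instance hasPointwiseLeftKanExtension_opProj [∀ c, HasCoproductsOfShape (X.obj c) 𝒜] :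
    (opProj X).HasPointwiseLeftKanExtension T := fun _ ↦
  Functor.Final.hasColimit_of_comp (Discrete.functor (fiberArrow X))

theorem coconeAt_ι_app_fiberArrow (E : (opProj X).LeftExtension T) (x : X.obj c) :
    (E.coconeAt c).ι.app (fiberArrow X x) = E.hom.app (opElt X x) :=
  (congrArg (E.hom.app (opElt X x) ≫ ·) (E.right.map_id c)).trans (Category.comp_id _)

/-- The value at `c` of a pointwise left Kan extension along `opProj X` is the coproduct over
`X(c)`, with the components of the unit as inclusions. -/
noncomputable def isColimitCofanOfIsPointwiseLeftKanExtensionAt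
    {E : (opProj X).LeftExtension T} (hE : E.IsPointwiseLeftKanExtensionAt c) :
    IsColimit (Cofan.mk (f := fun x : X.obj c ↦ T.obj (opElt X x))
      (E.right.obj c) fun x ↦ E.hom.app (opElt X x)) :=
  (isColimitCofanOfFinal (fiberArrow X) hE).ofIsoColimit
    (Cofan.ext (Iso.refl _) fun x ↦
      (Category.comp_id _).trans (coconeAt_ι_app_fiberArrow X E x))

end Elements

section Lan

variable {C 𝒜 : Type*} [Category* C] [Category* 𝒜] (X : Cᵒᵖ ⥤ Type*)
  [∀ c, HasCoproductsOfShape (X.obj c) 𝒜]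

/-- The component at `x ∈ X(c)` of the unit of the left Kan extension, as a map into its value
at `c`. -/
noncomputable def lanι {c : Cᵒᵖ} (T : (X.Elementsᵒᵖ)ᵒᵖ ⥤ 𝒜) (x : X.obj c) :
    T.obj (opElt X x) ⟶ ((opProj X).lan.obj T).obj c :=
  ((opProj X).lanUnit.app T).app (opElt X x)

/-- The value at `c` of the left Kan extension is the coproduct of `T` over `X(c)`. -/
noncomputable def isColimitLanCofan (c : Cᵒᵖ) (T : (X.Elementsᵒᵖ)ᵒᵖ ⥤ 𝒜) :
    IsColimit (Cofan.mk (((opProj X).lan.obj T).obj c) (lanι X T)) :=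
  isColimitCofanOfIsPointwiseLeftKanExtensionAt X
    ((opProj X).isPointwiseLeftKanExtensionLeftKanExtensionUnit T c)

/-- The isomorphism `Lan(T)(c) ≅ ∐_{x ∈ X(c)} T(x)` under the components of the unit. -/
noncomputable def lanObjObjIsoSigma (c : Cᵒᵖ) (T : (X.Elementsᵒᵖ)ᵒᵖ ⥤ 𝒜) :
    ((opProj X).lan.obj T).obj c ≅ ∐ fun x : X.obj c ↦ T.obj (opElt X x) :=
  (isColimitLanCofan X c T).coconePointUniqueUpToIso (coproductIsCoproduct _)

theorem lanι_lanObjObjIsoSigma_hom {c : Cᵒᵖ} (T : (X.Elementsᵒᵖ)ᵒᵖ ⥤ 𝒜) (x : X.obj c) :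
    lanι X T x ≫ (lanObjObjIsoSigma X c T).hom = Sigma.ι (fun x ↦ T.obj (opElt X x)) x :=
  (isColimitLanCofan X c T).comp_coconePointUniqueUpToIso_hom (coproductIsCoproduct _) ⟨x⟩

theorem lanι_naturality {c : Cᵒᵖ} {T T' : (X.Elementsᵒᵖ)ᵒᵖ ⥤ 𝒜} (τ : T ⟶ T') (x : X.obj c) :
    lanι X T x ≫ ((opProj X).lan.map τ).app c = τ.app (opElt X x) ≫ lanι X T' x :=
  (NatTrans.congr_app ((opProj X).lanUnit.naturality τ) (opElt X x)).symm

end Lan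

theorem stmt_3_general {C 𝒜 : Type*} [Category* C] [Category* 𝒜] (X : Cᵒᵖ ⥤ Type*)
    [∀ c, HasCoproductsOfShape (X.obj c) 𝒜] (c : Cᵒᵖ) :
    ∃ e : ∀ T : (X.Elementsᵒᵖ)ᵒᵖ ⥤ 𝒜,
        ((opProj X).lan.obj T).obj c ≅ ∐ fun x : X.obj c ↦ T.obj (opElt X x),
      ∀ (T T' : (X.Elementsᵒᵖ)ᵒᵖ ⥤ 𝒜) (τ : T ⟶ T'),
        ((opProj X).lan.map τ).app c ≫ (e T').hom =
          (e T).hom ≫ Limits.Sigma.map fun x : X.obj c ↦ τ.app (opElt X x) := by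
  refine ⟨lanObjObjIsoSigma X c, fun T T' τ ↦
    Cofan.IsColimit.hom_ext (isColimitLanCofan X c T) _ _ fun x ↦ ?_⟩
  calc
    lanι X T x ≫ ((opProj X).lan.map τ).app c ≫ (lanObjObjIsoSigma X c T').hom
      = τ.app (opElt X x) ≫ Sigma.ι (fun x ↦ T'.obj (opElt X x)) x := by
        rw [← Category.assoc, lanι_naturality, Category.assoc, lanι_lanObjObjIsoSigma_hom]
    _ = lanι X T x ≫ (lanObjObjIsoSigma X c T).hom ≫
          Limits.Sigma.map fun x : X.obj c ↦ τ.app (opElt X x) := by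
        rw [← Category.assoc, lanι_lanObjObjIsoSigma_hom, Sigma.ι_map]

theorem stmt_3 {𝒜 : Type u} [Category.{v} 𝒜] [HasColimits 𝒜] (X : SSet.{v})
    (n : SimplexCategory) :
    ∃ e : ∀ T : (SimplexCat X)ᵒᵖ ⥤ 𝒜,
        ((proj X).op.lan.obj T).obj (op n) ≅ ∐ fun σ : X.obj (op n) => T.obj (op (elt X σ)),
      ∀ (T T' : (SimplexCat X)ᵒᵖ ⥤ 𝒜) (τ : T ⟶ T'),
        ((proj X).op.lan.map τ).app (op n) ≫ (e T').hom =
          (e T).hom ≫ Limits.Sigma.map fun σ : X.obj (op n) => τ.app (op (elt X σ)) :=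
  stmt_3_general X (op n)
end
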